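/- Let (X_i)_{i≥1} be i.i.d. standard normal, X_{(n)} = max_{1≤i≤n} X_i, and Y_n = a_n(X_{(n)} - b_n) with a_n = √(2 log n) and b_n = √(2 log n) - (log log n + log(4π))/(2√(2 log n)). Then the Kullback–Leibler divergence of the law of Y_n from the standard Gumbel distribution Λ satisfies D_KL(L(Y_n) | Λ) = ((log log n)⁴/(512 (log n)²))(1 + o(1)) as n → ∞. -/

import Mathlib

open MeasureTheory Filter Real

/-- The standard normal cumulative distribution function. -/
noncomputable def stdNormalCDF (x : ℝ) : ℝ :=
  ∫ t in Set.Iic x, Real.exp (-t ^ 2 / 2) / Real.sqrt (2 * Real.pi)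

/-- The standard normal density. -/
noncomputable def stdNormalPDF (x : ℝ) : ℝ :=
  Real.exp (-x ^ 2 / 2) / Real.sqrt (2 * Real.pi)

/-- Scaling constant `a_n = √(2 log n)`. -/
noncomputable def aSeq (n : ℕ) : ℝ := Real.sqrt (2 * Real.log n)

/-- Centering constant
`b_n = √(2 log n) - (log log n + log (4π)) / (2 √(2 log n))`. -/
noncomputable def bSeq (n : ℕ) : ℝ :=
  aSeq n - (Real.log (Real.log n) + Real.log (4 * Real.pi)) / (2 * aSeq n)

/-- `c_n = log (√(4 π log n))`. -/
noncomputable def cSeq (n : ℕ) : ℝ := Real.log (Real.sqrt (4 * Real.pi * Real.log n))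

/-- The CDF of `Y_n = a_n (X_{(n)} - b_n)` where `X_{(n)}` is the maximum of `n`
i.i.d. standard normal random variables: `P(Y_n ≤ x) = Φ(b_n + x/a_n)^n`. -/
noncomputable def Fmax (n : ℕ) (x : ℝ) : ℝ := stdNormalCDF (bSeq n + x / aSeq n) ^ n

/-- The density of `Y_n = a_n (X_{(n)} - b_n)`:
`f_n(x) = n a_n⁻¹ φ(b_n + x/a_n) Φ(b_n + x/a_n)^{n-1}`. -/
noncomputable def fmax (n : ℕ) (x : ℝ) : ℝ :=
  n * (aSeq n)⁻¹ * stdNormalPDF (bSeq n + x / aSeq n) *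
    stdNormalCDF (bSeq n + x / aSeq n) ^ (n - 1)

/-- The density of the standard Gumbel distribution. -/
noncomputable def gumbelPDF (x : ℝ) : ℝ := Real.exp (-x - Real.exp (-x))

open Topology

lemma km_integral_of_deriv {F f : ℝ → ℝ} {A B : ℝ} (hd : ∀ x, HasDerivAt F (f x) x)
    (hc : Continuous f) (h0 : ∀ x, 0 ≤ f x) (hA : Tendsto F atBot (𝓝 A))
    (hB : Tendsto F atTop (𝓝 B)) : Integrable f ∧ ∫ x, f x = B - A := by
  have hi : Integrable f := by
    refine integrable_of_intervalIntegral_norm_tendsto (B - A) (l := atTop)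
      (a := fun i : ℝ => -i) (b := fun i : ℝ => i) ?_ tendsto_neg_atTop_atBot tendsto_id ?_
    · intro i
      exact (hc.integrableOn_Icc).mono_set Set.Ioc_subset_Icc_self
    · have : ∀ i : ℝ, ∫ x in (-i)..i, ‖f x‖ = F i - F (-i) := by
        intro i
        have : (fun x => ‖f x‖) = f := by
          funext x; exact Real.norm_of_nonneg (h0 x)
        rw [this]
        exact intervalIntegral.integral_eq_sub_of_hasDerivAt (fun x _ => hd x)
          (hc.intervalIntegrable _ _)
      simp_rw [this]
      exact hB.sub (hA.comp tendsto_neg_atTop_atBot)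
  exact ⟨hi, integral_of_hasDerivAt_of_tendsto hd hi hA hB⟩

lemma km_pdf_cont : Continuous stdNormalPDF := by
  unfold stdNormalPDF; fun_prop

lemma km_pdf_pos (x : ℝ) : 0 < stdNormalPDF x := by
  unfold stdNormalPDF; positivity

lemma km_pdf_eq : stdNormalPDF = fun x => (√(2 * π))⁻¹ * Real.exp (-(1/2) * x ^ 2) := by
  funext x; unfold stdNormalPDF
  rw [div_eq_inv_mul]; congr 2; ring

lemma km_pdf_int : Integrable stdNormalPDF := by
  rw [km_pdf_eq]
  exact (integrable_exp_neg_mul_sq (by norm_num)).const_mul _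

lemma km_pdf_integral : ∫ x, stdNormalPDF x = 1 := by
  rw [km_pdf_eq, integral_const_mul, integral_gaussian]
  rw [show π / (1/2) = 2 * π by ring]
  apply inv_mul_cancel₀; positivity

lemma km_cdf_eq (x : ℝ) : stdNormalCDF x = ∫ t in Set.Iic x, stdNormalPDF t := rfl

lemma km_pdf_deriv (x : ℝ) : HasDerivAt stdNormalPDF (-x * stdNormalPDF x) x := by
  have h1 : HasDerivAt (fun x : ℝ => -x ^ 2 / 2) (-x) x := by
    have := ((hasDerivAt_pow 2 x).neg).div_const 2
    refine this.congr_deriv ?_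
    simp; ring
  have := (h1.exp).div_const (√(2 * π))
  refine this.congr_deriv ?_
  unfold stdNormalPDF
  ring

lemma km_cdf_deriv (x : ℝ) : HasDerivAt stdNormalCDF (stdNormalPDF x) x := by
  have h : stdNormalCDF = fun u => stdNormalCDF 0 + ∫ t in (0:ℝ)..u, stdNormalPDF t := by
    funext u
    rw [← intervalIntegral.integral_Iic_sub_Iic km_pdf_int.integrableOn km_pdf_int.integrableOn,
      ← km_cdf_eq, ← km_cdf_eq]
    ring
  rw [h]
  exact (intervalIntegral.integral_hasDerivAt_right (km_pdf_cont.intervalIntegrable _ _)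
    (km_pdf_cont.stronglyMeasurableAtFilter _ _) km_pdf_cont.continuousAt).const_add _

lemma km_cdf_cont : Continuous stdNormalCDF :=
  continuous_iff_continuousAt.2 fun x => (km_cdf_deriv x).continuousAt

lemma km_cdf_top : Tendsto stdNormalCDF atTop (𝓝 1) := by
  have := (aecover_Iic (μ := volume) (tendsto_id (α := ℝ) (x := atTop))).integral_tendsto_of_countably_generated
    km_pdf_int
  rw [km_pdf_integral] at this
  exact this

lemma km_cdf_bot : Tendsto stdNormalCDF atBot (𝓝 0) :=
  tendsto_integral_Iic_zero (f := stdNormalPDF) (μ := volume) tendsto_id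

lemma km_cdf_mono : StrictMono stdNormalCDF :=
  strictMono_of_hasDerivAt_pos km_cdf_deriv km_pdf_pos

lemma km_cdf_pos (x : ℝ) : 0 < stdNormalCDF x := by
  have h1 := km_cdf_mono.monotone.le_of_tendsto km_cdf_bot (x - 1)
  have h2 := km_cdf_mono (show x - 1 < x by linarith)
  linarith

lemma km_cdf_lt (x : ℝ) : stdNormalCDF x < 1 := by
  have h1 := km_cdf_mono.monotone.ge_of_tendsto km_cdf_top (x + 1)
  have h2 := km_cdf_mono (show x < x + 1 by linarith)
  linarith

lemma km_pdf_top : Tendsto stdNormalPDF atTop (𝓝 0) := by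
  unfold stdNormalPDF
  rw [show (0:ℝ) = 0 / √(2 * π) by simp]
  refine Tendsto.div_const ?_ _
  refine Real.tendsto_exp_atBot.comp ?_
  have : Tendsto (fun x : ℝ => -(x ^ 2 / 2)) atTop atBot :=
    tendsto_neg_atTop_atBot.comp ((tendsto_pow_atTop (by norm_num)).atTop_div_const (by norm_num))
  refine this.congr fun x => by ring

/-- Lower Mills bound. -/
lemma km_mills_lower (z : ℝ) : stdNormalPDF z * (z / (1 + z ^ 2)) ≤ 1 - stdNormalCDF z := by
  set U : ℝ → ℝ := fun z => 1 - stdNormalCDF z - stdNormalPDF z * (z / (1 + z ^ 2)) with hU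
  have hd : ∀ z, HasDerivAt U (-(stdNormalPDF z * (2 / (1 + z ^ 2) ^ 2))) z := by
    intro z
    have hne : (1 + z ^ 2) ≠ 0 := by positivity
    have h1 : HasDerivAt (fun z : ℝ => z / (1 + z ^ 2))
        ((1 * (1 + z ^ 2) - z * (2 * z)) / (1 + z ^ 2) ^ 2) z := by
      refine (hasDerivAt_id z).div ?_ hne
      simpa using (hasDerivAt_pow 2 z).const_add 1
    have h2 := ((km_cdf_deriv z).const_sub 1).sub ((km_pdf_deriv z).mul h1)
    refine h2.congr_deriv ?_
    field_simp
    ring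
  have ha : Antitone U := by
    apply antitone_of_deriv_nonpos (fun z => (hd z).differentiableAt)
    intro z
    rw [(hd z).deriv]
    have := km_pdf_pos z
    have : 0 ≤ stdNormalPDF z * (2 / (1 + z ^ 2) ^ 2) := by positivity
    linarith
  have ht : Tendsto U atTop (𝓝 (1 - 1 - 0)) := by
    refine (km_cdf_top.const_sub 1).sub ?_
    refine squeeze_zero_norm (fun z => ?_) km_pdf_top
    rw [norm_mul, Real.norm_of_nonneg (km_pdf_pos z).le]
    refine mul_le_of_le_one_right (km_pdf_pos z).le ?_
    rw [Real.norm_eq_abs, abs_div, abs_of_pos (by positivity : 0 < 1 + z ^ 2), div_le_one (by positivity)]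
    nlinarith [sq_abs z, sq_nonneg (|z| - 1), abs_nonneg z]
  have := ha.le_of_tendsto ht z
  simp only [hU] at this
  linarith

lemma km_mills_upper (z : ℝ) (hz : 0 < z) : 1 - stdNormalCDF z ≤ stdNormalPDF z / z := by
  set V : ℝ → ℝ := fun z => stdNormalPDF z / z - (1 - stdNormalCDF z) with hV
  have hd : ∀ z, 0 < z → HasDerivAt V (-(stdNormalPDF z / z ^ 2)) z := by
    intro z hz
    have h2 := ((km_pdf_deriv z).div (hasDerivAt_id z) hz.ne').sub ((km_cdf_deriv z).const_sub 1)
    refine h2.congr_deriv ?_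
    simp only [id]
    field_simp
    ring
  have ha : AntitoneOn V (Set.Ioi 0) := by
    apply antitoneOn_of_deriv_nonpos (convex_Ioi 0)
    · intro x hx; exact (hd x hx).continuousAt.continuousWithinAt
    · intro x hx; rw [interior_Ioi] at hx; exact (hd x hx).differentiableAt.differentiableWithinAt
    · intro x hx; rw [interior_Ioi] at hx
      rw [(hd x hx).deriv]
      have := km_pdf_pos x
      have : 0 ≤ stdNormalPDF x / x ^ 2 := by positivity
      linarith
  have ht : Tendsto V atTop (𝓝 (0 - (1 - 1))) := by
    refine Tendsto.sub ?_ (km_cdf_top.const_sub 1)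
    exact km_pdf_top.div_atTop tendsto_id
  have : 0 - (1 - 1) ≤ V z := by
    refine le_of_tendsto ht ?_
    filter_upwards [eventually_ge_atTop z] with y hy
    exact ha hz (lt_of_lt_of_le hz hy) hy
  simp only [hV] at this
  linarith

/-! Parameters -/

noncomputable def kmDel (n : ℕ) : ℝ := cSeq n ^ 2 / (2 * aSeq n ^ 2)
noncomputable def kmT (n : ℕ) (x : ℝ) : ℝ := (x - cSeq n) ^ 2 / (2 * aSeq n ^ 2)
noncomputable def kmZ (n : ℕ) (x : ℝ) : ℝ := bSeq n + x / aSeq n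
noncomputable def kmP (n : ℕ) (x : ℝ) : ℝ := 1 - stdNormalCDF (kmZ n x)
noncomputable def kmG (n : ℕ) (x : ℝ) : ℝ := Real.log (fmax n x / gumbelPDF x)

lemma km_log_pos {n : ℕ} (hn : 2 ≤ n) : 0 < Real.log n :=
  Real.log_pos (by exact_mod_cast hn)

lemma km_a_pos {n : ℕ} (hn : 2 ≤ n) : 0 < aSeq n := by
  have := km_log_pos hn
  unfold aSeq; positivity

lemma km_a_sq {n : ℕ} (hn : 2 ≤ n) : aSeq n ^ 2 = 2 * Real.log n := by
  have := km_log_pos hn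
  unfold aSeq; exact Real.sq_sqrt (by positivity)

lemma km_c_eq {n : ℕ} (hn : 2 ≤ n) :
    cSeq n = (Real.log (Real.log n) + Real.log (4 * π)) / 2 := by
  have := km_log_pos hn
  unfold cSeq
  rw [Real.log_sqrt (by positivity), Real.log_mul (by positivity) (by positivity)]; ring

lemma km_exp_c {n : ℕ} (hn : 2 ≤ n) : Real.exp (cSeq n) = √(2 * π) * aSeq n := by
  have := km_log_pos hn
  unfold cSeq aSeq
  rw [Real.exp_log (by positivity), ← Real.sqrt_mul (by positivity)]; congr 1; ring

lemma km_z_eq {n : ℕ} (hn : 2 ≤ n) (x : ℝ) : kmZ n x = aSeq n + (x - cSeq n) / aSeq n := by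
  have := km_a_pos hn
  unfold kmZ bSeq
  rw [km_c_eq hn]; field_simp; ring

lemma km_npdf {n : ℕ} (hn : 2 ≤ n) (x : ℝ) :
    n * stdNormalPDF (kmZ n x) = aSeq n * Real.exp (-x - kmT n x) := by
  have ha := km_a_pos hn
  have hn0 : (0:ℝ) < n := by exact_mod_cast (by omega : 0 < n)
  have h1 : -(kmZ n x) ^ 2 / 2 = -Real.log n + cSeq n + (-x - kmT n x) := by
    rw [km_z_eq hn]; unfold kmT
    have := km_a_sq hn
    have h2 : Real.log n = aSeq n ^ 2 / 2 := by linarith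
    rw [h2]; field_simp; ring
  unfold stdNormalPDF
  rw [h1, Real.exp_add, Real.exp_add, Real.exp_neg, Real.exp_log hn0, km_exp_c hn]
  have : √(2 * π) ≠ 0 := by positivity
  field_simp

lemma km_fmax_eq {n : ℕ} (hn : 2 ≤ n) (x : ℝ) :
    fmax n x = Real.exp (-x - kmT n x) * (1 - kmP n x) ^ (n - 1) := by
  have ha := km_a_pos hn
  have h := km_npdf hn x
  unfold fmax kmP
  rw [← kmZ]
  rw [show (n:ℝ) * (aSeq n)⁻¹ * stdNormalPDF (kmZ n x) = (aSeq n)⁻¹ * (n * stdNormalPDF (kmZ n x)) by ring, h]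
  rw [← mul_assoc, inv_mul_cancel₀ ha.ne']; ring

lemma km_p_pos (n : ℕ) (x : ℝ) : 0 < kmP n x := by
  have := km_cdf_lt (kmZ n x); unfold kmP; linarith
lemma km_p_lt (n : ℕ) (x : ℝ) : kmP n x < 1 := by
  have := km_cdf_pos (kmZ n x); unfold kmP; linarith

lemma km_fmax_pos {n : ℕ} (hn : 2 ≤ n) (x : ℝ) : 0 < fmax n x := by
  rw [km_fmax_eq hn]
  have := km_p_lt n x
  have : 0 < 1 - kmP n x := by linarith
  positivity

lemma km_g_eq {n : ℕ} (hn : 2 ≤ n) (x : ℝ) :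
    kmG n x = Real.exp (-x) + ((n:ℝ) - 1) * Real.log (1 - kmP n x) - kmT n x := by
  have := km_p_lt n x
  have h : 0 < 1 - kmP n x := by linarith
  unfold kmG
  rw [Real.log_div (km_fmax_pos hn x).ne' (by unfold gumbelPDF; positivity), km_fmax_eq hn,
    Real.log_mul (by positivity) (by positivity), Real.log_exp, Real.log_pow]
  unfold gumbelPDF
  rw [Real.log_exp, Nat.cast_sub (by omega)]
  push_cast; ring

lemma km_gumbel_mul {n : ℕ} (hn : 2 ≤ n) (x : ℝ) :
    gumbelPDF x * Real.exp (kmG n x) = fmax n x := by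
  have h1 : 0 < gumbelPDF x := by unfold gumbelPDF; positivity
  have h2 := km_fmax_pos hn x
  unfold kmG
  rw [Real.exp_log (by positivity)]; field_simp

lemma km_fmax_cont (n : ℕ) : Continuous (fmax n) := by
  have h1 := km_pdf_cont
  have h2 := km_cdf_cont
  unfold fmax
  fun_prop

lemma km_fmax_integral {n : ℕ} (hn : 2 ≤ n) : Integrable (fmax n) ∧ ∫ x, fmax n x = 1 := by
  have ha := km_a_pos hn
  have h := km_integral_of_deriv (F := fun x => stdNormalCDF (bSeq n + x / aSeq n) ^ n) (f := fmax n)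
    (A := 0) (B := 1) ?_ (km_fmax_cont n) (fun x => (km_fmax_pos hn x).le) ?_ ?_
  · simpa using h
  · intro x
    have h1 : HasDerivAt (fun x => bSeq n + x / aSeq n) (1 / aSeq n) x :=
      ((hasDerivAt_id x).div_const _).const_add _
    have h2 := ((km_cdf_deriv _).comp x h1).pow n
    refine h2.congr_deriv ?_
    unfold fmax; simp only [Function.comp]; ring
  · have h1 : Tendsto (fun x => bSeq n + x / aSeq n) atBot atBot :=
      tendsto_atBot_add_const_left _ _ (tendsto_id.atBot_div_const ha)
    have := (km_cdf_bot.comp h1).pow n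
    rwa [zero_pow (by omega)] at this
  · have h1 : Tendsto (fun x => bSeq n + x / aSeq n) atTop atTop :=
      tendsto_atTop_add_const_left _ _ (tendsto_id.atTop_div_const ha)
    have := (km_cdf_top.comp h1).pow n
    rwa [one_pow] at this

lemma km_gumbel_cont : Continuous gumbelPDF := by unfold gumbelPDF; fun_prop

lemma km_exp_neg_deriv (x : ℝ) : HasDerivAt (fun x : ℝ => Real.exp (-x)) (-Real.exp (-x)) x := by
  have := (hasDerivAt_neg x).exp
  convert this using 1; ring

lemma km_expneg_top : Tendsto (fun x : ℝ => Real.exp (-x)) atTop (𝓝 0) :=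
  Real.tendsto_exp_atBot.comp tendsto_neg_atTop_atBot
lemma km_expneg_bot : Tendsto (fun x : ℝ => Real.exp (-x)) atBot atTop :=
  Real.tendsto_exp_atTop.comp tendsto_neg_atBot_atTop

lemma km_gumbel_integral : Integrable gumbelPDF ∧ ∫ x, gumbelPDF x = 1 := by
  have h := km_integral_of_deriv (F := fun x => Real.exp (-Real.exp (-x))) (f := gumbelPDF)
    (A := 0) (B := 1) ?_ km_gumbel_cont (fun x => by unfold gumbelPDF; positivity) ?_ ?_
  · simpa using h
  · intro x
    have := ((km_exp_neg_deriv x).neg).exp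
    refine this.congr_deriv ?_
    unfold gumbelPDF
    rw [sub_eq_add_neg, Real.exp_add]; simp; ring
  · exact km_expneg_top.comp km_expneg_bot
  · have := (Real.continuous_exp.tendsto _).comp km_expneg_top.neg
    simpa [Function.comp_def] using this

lemma km_limit_integral : ∫ x, gumbelPDF x * ((Real.exp (-x) - 1) ^ 2 / 2) = 1 / 2 := by
  have h := km_integral_of_deriv
    (F := fun x => (Real.exp (-x) ^ 2 + 1) * Real.exp (-Real.exp (-x)) / 2)
    (f := fun x => gumbelPDF x * ((Real.exp (-x) - 1) ^ 2 / 2))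
    (A := 0) (B := 1 / 2) ?_ ?_ (fun x => by unfold gumbelPDF; positivity) ?_ ?_
  · simpa using h.2
  · intro x
    have h0 := km_exp_neg_deriv x
    have := ((((h0.pow 2).add_const 1).mul (h0.neg).exp)).div_const 2
    refine this.congr_deriv ?_
    unfold gumbelPDF
    rw [sub_eq_add_neg, Real.exp_add]; simp; ring
  · have := km_gumbel_cont; fun_prop
  · have h1 := (Real.tendsto_pow_mul_exp_neg_atTop_nhds_zero 2).comp km_expneg_bot
    have h2 := km_expneg_top.comp km_expneg_bot
    have := (h1.add h2).div_const 2
    simp only [Function.comp_def] at this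
    convert this using 2 <;> ring
  · have h1 := (Real.continuous_exp.tendsto _).comp km_expneg_top.neg
    have := (((km_expneg_top.pow 2).add_const 1).mul h1).div_const 2
    simpa [Function.comp_def] using this

structure KmGood (n : ℕ) : Prop where
  n2 : 2 ≤ n
  a4 : 4 ≤ aSeq n
  c1 : 1 ≤ cSeq n
  ca : cSeq n ≤ aSeq n ^ 2 / 8
  c2 : cSeq n ^ 2 ≤ 2 * aSeq n ^ 2
  nd : 1 / (n : ℝ) ≤ kmDel n
  e1 : 1 / kmDel n ^ 2 ≤ Real.exp (aSeq n ^ 2 / 2 - cSeq n)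
  e2 : (n:ℝ) ^ 9 * stdNormalCDF (aSeq n / 2) ^ (n - 1) * (1 / kmDel n ^ 2) ≤ 1

lemma km_t_nonneg (n : ℕ) (x : ℝ) : 0 ≤ kmT n x := by unfold kmT; positivity

lemma km_log_lower {p : ℝ} (h0 : 0 ≤ p) (h1 : p ≤ 1 / 2) :
    -p - 2 * p ^ 2 ≤ Real.log (1 - p) := by
  have h := Real.one_sub_inv_le_log_of_pos (show 0 < 1 - p by linarith)
  refine le_trans ?_ h
  have : (1 - p)⁻¹ ≤ 1 + p + 2 * p ^ 2 := by
    rw [inv_le_iff_one_le_mul₀ (by linarith)]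
    nlinarith [sq_nonneg p, mul_nonneg h0 h0, mul_nonneg (mul_nonneg h0 h0) (by linarith : 0 ≤ 1 - 2 * p)]
  linarith

lemma km_log_upper {p : ℝ} (h1 : p < 1) : Real.log (1 - p) ≤ -p := by
  have := Real.log_le_sub_one_of_pos (show 0 < 1 - p by linarith)
  linarith

/-- two-sided bounds for `n p`. -/
lemma km_np_lower {n : ℕ} (hn : 2 ≤ n) (x : ℝ) :
    Real.exp (-x - kmT n x) * (aSeq n * kmZ n x / (1 + kmZ n x ^ 2)) ≤ n * kmP n x := by
  have h := km_mills_lower (kmZ n x)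
  have hp := km_npdf hn x
  have hn0 : (0:ℝ) ≤ n := by positivity
  have := mul_le_mul_of_nonneg_left h hn0
  unfold kmP
  refine le_trans (le_of_eq ?_) this
  rw [← mul_assoc, hp]; ring

lemma km_np_upper {n : ℕ} (hn : 2 ≤ n) (x : ℝ) (hz : 0 < kmZ n x) :
    n * kmP n x ≤ Real.exp (-x - kmT n x) * (aSeq n / kmZ n x) := by
  have h := km_mills_upper (kmZ n x) hz
  have hp := km_npdf hn x
  have hn0 : (0:ℝ) ≤ n := by positivity
  have := mul_le_mul_of_nonneg_left h hn0
  unfold kmP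
  refine le_trans this (le_of_eq ?_)
  rw [← mul_div_assoc, hp]; ring

lemma km_np_near {n : ℕ} (hn : 2 ≤ n) (x : ℝ) (hz : aSeq n / 2 ≤ kmZ n x) :
    |n * kmP n x - Real.exp (-x - kmT n x)| ≤
      Real.exp (-x) * ((2 * |x - cSeq n| + 4) / aSeq n ^ 2) := by
  have ha := km_a_pos hn
  have hz0 : 0 < kmZ n x := by linarith
  have hlo := km_np_lower hn x
  have hup := km_np_upper hn x hz0
  have ht := km_t_nonneg n x
  have hE : Real.exp (-x - kmT n x) ≤ Real.exp (-x) := Real.exp_le_exp.2 (by linarith)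
  have hE0 := Real.exp_pos (-x - kmT n x)
  set E := Real.exp (-x - kmT n x)
  set z := kmZ n x with hzdef
  set a := aSeq n
  have hze : z = a + (x - cSeq n) / a := km_z_eq hn x
  set y := x - cSeq n
  have hy1 := le_abs_self y
  have hy2 := neg_abs_le y
  have hy0 := abs_nonneg y
  have haz : a * z = a ^ 2 + y := by rw [hze]; field_simp
  have hR0 : 0 ≤ (2 * |y| + 4) / a ^ 2 := by positivity
  have u1 : a / z ≤ 1 + (2 * |y| + 4) / a ^ 2 := by
    have e : a / z = 1 + (-y) / (a * z) := by
      field_simp; linarith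
    rw [e]
    have : (-y) / (a * z) ≤ (2 * |y| + 4) / a ^ 2 := by
      rw [div_le_div_iff₀ (by positivity) (by positivity)]
      have h1 : a ^ 2 / 2 ≤ a * z := by nlinarith
      calc -y * a ^ 2 ≤ |y| * a ^ 2 := by gcongr; linarith
        _ = (2 * |y|) * (a ^ 2 / 2) := by ring
        _ ≤ (2 * |y| + 4) * (a * z) := by gcongr; linarith
    linarith
  have u2 : 1 - (2 * |y| + 4) / a ^ 2 ≤ a * z / (1 + z ^ 2) := by
    have h1 : a ^ 2 / 2 ≤ a * z := by nlinarith
    have h2 : a ^ 2 / 4 ≤ z ^ 2 := by nlinarith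
    have e : a * z / (1 + z ^ 2) = 1 - (1 + z * (y / a)) / (1 + z ^ 2) := by
      field_simp
      have : z ^ 2 = a * z + z * y / a := by
        rw [pow_two]; nth_rewrite 1 [hze]; ring
      rw [this]; field_simp; ring
    rw [e]
    have : (1 + z * (y / a)) / (1 + z ^ 2) ≤ (2 * |y| + 4) / a ^ 2 := by
      have i1 : 1 / (1 + z ^ 2) ≤ 4 / a ^ 2 := by
        rw [div_le_div_iff₀ (by positivity) (by positivity)]; nlinarith
      have i2 : z * (y / a) / (1 + z ^ 2) ≤ 2 * |y| / a ^ 2 := by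
        calc z * (y / a) / (1 + z ^ 2) ≤ z * (|y| / a) / (z ^ 2) := by
              gcongr
              linarith
          _ = |y| / (a * z) := by field_simp
          _ ≤ |y| / (a ^ 2 / 2) := by gcongr
          _ = 2 * |y| / a ^ 2 := by field_simp
      calc _ = 1 / (1 + z ^ 2) + z * (y / a) / (1 + z ^ 2) := by ring
        _ ≤ 4 / a ^ 2 + 2 * |y| / a ^ 2 := by linarith
        _ = _ := by ring
    linarith
  have m1 := mul_le_mul_of_nonneg_left u1 hE0.le
  have m2 := mul_le_mul_of_nonneg_left u2 hE0.le
  have m3 := mul_le_mul_of_nonneg_right hE hR0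
  rw [abs_le]; constructor <;> nlinarith

/-- Main expansion. -/
lemma km_expand {n : ℕ} (hn : 2 ≤ n) (ha4 : 4 ≤ aSeq n) (x : ℝ) (hz : aSeq n / 2 ≤ kmZ n x) :
    |kmG n x - (Real.exp (-x) * (1 - Real.exp (-kmT n x)) - kmT n x)| ≤
      Real.exp (-x) * ((2 * |x - cSeq n| + 4) / aSeq n ^ 2) +
        (8 * Real.exp (-x) ^ 2 + 2 * Real.exp (-x)) / n := by
  have hn0 : (0:ℝ) < n := by exact_mod_cast (by omega : 0 < n)
  have hn1 : (1:ℝ) ≤ n := by exact_mod_cast (by omega : 1 ≤ n)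
  have hz0 : 2 ≤ kmZ n x := by linarith
  have hnear := km_np_near hn x hz
  have hup := km_np_upper hn x (by linarith)
  have ht := km_t_nonneg n x
  have hE : Real.exp (-x - kmT n x) ≤ Real.exp (-x) := Real.exp_le_exp.2 (by linarith)
  have hEe : Real.exp (-x - kmT n x) = Real.exp (-x) * Real.exp (-kmT n x) := by
    rw [← Real.exp_add]; ring_nf
  have hp0 := km_p_pos n x
  have hp1 := km_p_lt n x
  have hphalf : kmP n x ≤ 1 / 2 := by
    have h := km_mills_upper (kmZ n x) (by linarith)
    have h1 : stdNormalPDF (kmZ n x) ≤ 1 := by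
      unfold stdNormalPDF
      have hs : 1 ≤ √(2 * π) := by
        rw [Real.one_le_sqrt]; nlinarith [Real.pi_gt_three]
      rw [div_le_one (by positivity)]
      refine le_trans ?_ hs
      rw [Real.exp_le_one_iff]
      have := sq_nonneg (kmZ n x); linarith
    have h2 : stdNormalPDF (kmZ n x) / kmZ n x ≤ 1 / 2 := by
      gcongr
    unfold kmP; linarith
  have hnp : n * kmP n x ≤ 2 * Real.exp (-x) := by
    refine hup.trans ?_
    have : aSeq n / kmZ n x ≤ 2 := by
      rw [div_le_iff₀ (by linarith)]; linarith
    calc _ ≤ Real.exp (-x) * 2 := by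
          apply mul_le_mul hE this _ (Real.exp_pos _).le
          positivity
      _ = _ := by ring
  have hpn : kmP n x ≤ 2 * Real.exp (-x) / n := by
    rw [le_div_iff₀ hn0]; linarith
  have hnp2 : 2 * (n * kmP n x ^ 2) ≤ 8 * Real.exp (-x) ^ 2 / n := by
    rw [le_div_iff₀ hn0]
    have : (n * kmP n x) ^ 2 ≤ (2 * Real.exp (-x)) ^ 2 := by gcongr
    nlinarith
  have l1 := km_log_lower hp0.le hphalf
  have l2 := km_log_upper hp1
  have l3 := mul_le_mul_of_nonneg_left l1 (show (0:ℝ) ≤ n - 1 by linarith)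
  have l4 := mul_le_mul_of_nonneg_left l2 (show (0:ℝ) ≤ n - 1 by linarith)
  rw [km_g_eq hn]
  rw [hEe] at hnear
  rw [add_div (8 * Real.exp (-x) ^ 2)]
  have q : 0 ≤ kmP n x ^ 2 := by positivity
  rw [abs_le] at hnear ⊢
  obtain ⟨n1, n2⟩ := hnear
  constructor
  · nlinarith
  · nlinarith [div_nonneg (show 0 ≤ 8 * Real.exp (-x) ^ 2 by positivity) hn0.le]

lemma km_del_pos {n : ℕ} (h : KmGood n) : 0 < kmDel n := by
  have := h.c1; have := h.a4
  unfold kmDel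
  have : 0 < cSeq n := by linarith
  have : 0 < aSeq n := by linarith
  positivity

lemma km_inv_a {n : ℕ} (h : KmGood n) : 1 / aSeq n ^ 2 = 2 * kmDel n / cSeq n ^ 2 := by
  have := h.c1; have := h.a4
  have : 0 < cSeq n := by linarith
  have : 0 < aSeq n := by linarith
  unfold kmDel
  field_simp

lemma km_t_del {n : ℕ} (h : KmGood n) (x : ℝ) :
    kmT n x = kmDel n * ((x - cSeq n) / cSeq n) ^ 2 := by
  have := h.c1; have := h.a4
  have : 0 < cSeq n := by linarith
  have : 0 < aSeq n := by linarith
  unfold kmDel kmT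
  field_simp

lemma km_g_bound {n : ℕ} (h : KmGood n) (x : ℝ) (hz : aSeq n / 2 ≤ kmZ n x) :
    |kmG n x| ≤ kmDel n * (16 * (1 + x ^ 2) * (1 + Real.exp (-x)) ^ 2) := by
  have he := km_expand h.n2 h.a4 x hz
  have hd := km_del_pos h
  have hc := h.c1
  have hw := Real.exp_pos (-x)
  set w := Real.exp (-x)
  set d := kmDel n
  set c := cSeq n
  have ht0 := km_t_nonneg n x
  have ht : kmT n x ≤ 2 * d * (1 + x ^ 2) := by
    rw [km_t_del h]
    have : ((x - c) / c) ^ 2 ≤ 2 * (1 + x ^ 2) := by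
      rw [div_pow, div_le_iff₀ (by positivity)]
      nlinarith [sq_nonneg (x + c), mul_nonneg (sq_nonneg x) (show 0 ≤ c ^ 2 - 1 by nlinarith)]
    nlinarith
  have hR : (2 * |x - c| + 4) / aSeq n ^ 2 ≤ 14 * d * (1 + x ^ 2) := by
    rw [div_eq_mul_one_div, km_inv_a h]
    have h1 : |x - c| ≤ |x| + c := by
      have := abs_sub x c
      rwa [abs_of_nonneg (show 0 ≤ c by linarith)] at this
    have h2 : 2 * |x| ≤ 1 + x ^ 2 := by nlinarith [sq_nonneg (|x| - 1), sq_abs x]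
    have h3 : (2 * |x - c| + 4) ≤ 7 * (1 + x ^ 2) * c ^ 2 := by
      have : 1 ≤ c ^ 2 := by nlinarith
      have : c ≤ c ^ 2 := by nlinarith
      nlinarith [mul_nonneg (sq_nonneg x) (show 0 ≤ c ^ 2 - 1 by nlinarith)]
    calc (2 * |x - c| + 4) * (2 * d / c ^ 2) ≤ (7 * (1 + x ^ 2) * c ^ 2) * (2 * d / c ^ 2) := by
          gcongr
      _ = _ := by field_simp; ring
  have hN : (8 * w ^ 2 + 2 * w) / n ≤ d * (8 * w ^ 2 + 2 * w) := by
    have := h.nd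
    rw [div_eq_mul_one_div, mul_comm]
    gcongr
  have hex : Real.exp (-kmT n x) ≤ 1 := Real.exp_le_one_iff.2 (by linarith)
  have hex2 : 1 - kmT n x ≤ Real.exp (-kmT n x) := Real.one_sub_le_exp_neg _
  have hwe : w * (1 - Real.exp (-kmT n x)) ≤ w * (2 * d * (1 + x ^ 2)) := by
    gcongr; linarith
  have hwe0 : 0 ≤ w * (1 - Real.exp (-kmT n x)) := mul_nonneg hw.le (by linarith)
  have hwR := mul_le_mul_of_nonneg_left hR hw.le
  have hs : 0 ≤ x ^ 2 := by positivity
  have hfin : d * (16 * (1 + x ^ 2) * (1 + w) ^ 2) - (2 * d * (1 + x ^ 2) + w * (2 * d * (1 + x ^ 2))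
      + w * (14 * d * (1 + x ^ 2)) + d * (8 * w ^ 2 + 2 * w)) =
      d * (14 + 14 * w + 8 * w ^ 2 + x ^ 2 * (14 + 16 * w + 16 * w ^ 2)) := by ring
  have hfin0 : 0 ≤ d * (14 + 14 * w + 8 * w ^ 2 + x ^ 2 * (14 + 16 * w + 16 * w ^ 2)) := by
    positivity
  rw [abs_le] at he ⊢
  constructor <;> linarith [he.1, he.2]

noncomputable def kmD (x : ℝ) : ℝ := 3 * (Real.exp (-x) * Real.exp (-(Real.exp (-x / 2) / 16)))

lemma km_exp_one_lt : Real.exp 1 < 3 := by have := Real.exp_one_lt_d9; linarith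

lemma km_D_of_nonneg {x : ℝ} (hx : 0 ≤ x) : Real.exp (-x) ≤ kmD x := by
  unfold kmD
  have h1 : Real.exp (-x / 2) ≤ 1 := Real.exp_le_one_iff.2 (by linarith)
  have h2 : Real.exp (-1) ≤ Real.exp (-(Real.exp (-x / 2) / 16)) := Real.exp_le_exp.2 (by linarith)
  have h3 : 1 ≤ 3 * Real.exp (-1) := by
    rw [Real.exp_neg]
    have := km_exp_one_lt
    have := Real.exp_pos 1
    rw [← div_eq_mul_inv, le_div_iff₀ this]; linarith
  have := Real.exp_pos (-x)
  nlinarith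

lemma km_D_of_le {x s : ℝ} (hs : Real.exp (-x / 2) / 16 ≤ s) : Real.exp (-x) * Real.exp (-s) ≤ kmD x := by
  unfold kmD
  have h2 : Real.exp (-s) ≤ Real.exp (-(Real.exp (-x / 2) / 16)) := Real.exp_le_exp.2 (by linarith)
  have := Real.exp_pos (-x)
  have := Real.exp_pos (-(Real.exp (-x / 2) / 16))
  nlinarith [mul_le_mul_of_nonneg_left h2 (Real.exp_pos (-x)).le, mul_pos (Real.exp_pos (-x)) this]

lemma km_gumbel_le (x : ℝ) : gumbelPDF x ≤ kmD x := by
  have e : gumbelPDF x = Real.exp (-x) * Real.exp (-Real.exp (-x)) := by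
    unfold gumbelPDF; rw [← Real.exp_add]; ring_nf
  rcases le_total 0 x with hx | hx
  · refine le_trans ?_ (km_D_of_nonneg hx)
    unfold gumbelPDF
    refine Real.exp_le_exp.2 ?_
    have := Real.exp_pos (-x); linarith
  · rw [e]
    apply km_D_of_le
    have : Real.exp (-x / 2) ≤ Real.exp (-x) := Real.exp_le_exp.2 (by linarith)
    have := Real.exp_pos (-x); linarith

lemma km_pow_le_exp {p : ℝ} (hp : p < 1) (n : ℕ) (hn : 2 ≤ n) :
    (1 - p) ^ (n - 1) ≤ Real.exp (-(((n:ℝ) - 1) * p)) := by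
  have h := Real.one_sub_le_exp_neg p
  calc (1 - p) ^ (n - 1) ≤ (Real.exp (-p)) ^ (n - 1) := by
        apply pow_le_pow_left₀ (by linarith) h
    _ = _ := by
        rw [← Real.exp_nat_mul, Nat.cast_sub (by omega)]; congr 1; push_cast; ring

lemma km_fmax_le {n : ℕ} (h : KmGood n) (x : ℝ) (hz : aSeq n / 2 ≤ kmZ n x) : fmax n x ≤ kmD x := by
  have ht := km_t_nonneg n x
  have hp0 := km_p_pos n x
  have hp1 := km_p_lt n x
  have hE : Real.exp (-x - kmT n x) ≤ Real.exp (-x) := Real.exp_le_exp.2 (by linarith)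
  rw [km_fmax_eq h.n2]
  rcases le_total 0 x with hx | hx
  · refine le_trans ?_ (km_D_of_nonneg hx)
    calc _ ≤ Real.exp (-x) * 1 := by
          gcongr
          exact pow_le_one₀ (by linarith) (by linarith)
      _ = _ := by ring
  · refine le_trans ?_ (km_D_of_le (s := ((n:ℝ) - 1) * kmP n x) ?_)
    · gcongr
      exact km_pow_le_exp hp1 n h.n2
    · have hlo := km_np_lower h.n2 x
      have ha := km_a_pos h.n2
      have hn2 : (2:ℝ) ≤ n := by exact_mod_cast h.n2
      have hc1 := h.c1
      have ha4 := h.a4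
      have hca := h.ca
      have hc2 := h.c2
      have hze := km_z_eq h.n2 x
      set z := kmZ n x
      set a := aSeq n
      set c := cSeq n
      have hy : c - x ≤ a ^ 2 / 2 := by
        have : a / 2 ≤ a + (x - c) / a := by rw [← hze]; exact hz
        have h2 := mul_le_mul_of_nonneg_left this ha.le
        have : a * (a + (x - c) / a) = a ^ 2 + (x - c) := by field_simp
        rw [this] at h2; nlinarith
      have htle : kmT n x ≤ -x / 2 + 1 := by
        unfold kmT
        rw [div_le_iff₀ (by positivity)]
        change (x - c) ^ 2 ≤ (-x / 2 + 1) * (2 * a ^ 2)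
        nlinarith [mul_le_mul_of_nonneg_left hy (show 0 ≤ -x by linarith),
          mul_le_mul_of_nonneg_left hca (show 0 ≤ -x by linarith), mul_nonneg (show 0 ≤ -x by linarith) (sq_nonneg a)]
      have hza : z ≤ a := by
        rw [hze]
        have : (x - c) / a ≤ 0 := div_nonpos_of_nonpos_of_nonneg (by linarith) ha.le
        linarith
      have hfr : 1 / 2 ≤ a * z / (1 + z ^ 2) := by
        rw [div_le_div_iff₀ (by norm_num) (by positivity)]
        nlinarith
      have hE1 : Real.exp (-x / 2) / 4 ≤ Real.exp (-x - kmT n x) := by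
        have : Real.exp (-x / 2) * Real.exp (-1) ≤ Real.exp (-x - kmT n x) := by
          rw [← Real.exp_add]; exact Real.exp_le_exp.2 (by linarith)
        refine le_trans ?_ this
        rw [div_eq_mul_inv, Real.exp_neg]
        gcongr
        have := km_exp_one_lt; linarith
      have : Real.exp (-x / 2) / 4 * (1 / 2) ≤ n * kmP n x := by
        refine le_trans ?_ hlo
        gcongr
      nlinarith

lemma km_dom : ∃ C : ℝ, 0 ≤ C ∧ ∀ x : ℝ,
    (16 * (1 + x ^ 2) * (1 + Real.exp (-x)) ^ 2) ^ 2 * (2 * kmD x) ≤ C * (1 + x ^ 2)⁻¹ := by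
  refine ⟨1536 * (16 * 2160 + 1024 * (16 ^ 16 * (Nat.factorial 16 : ℕ))), by positivity, fun x => ?_⟩
  rw [← div_eq_mul_inv, le_div_iff₀ (by positivity)]
  have e : (16 * (1 + x ^ 2) * (1 + Real.exp (-x)) ^ 2) ^ 2 * (2 * kmD x) * (1 + x ^ 2) =
      1536 * ((1 + x ^ 2) ^ 3 * (1 + Real.exp (-x)) ^ 4 *
        (Real.exp (-x) * Real.exp (-(Real.exp (-x / 2) / 16)))) := by
    unfold kmD; ring
  rw [e]
  refine mul_le_mul_of_nonneg_left ?_ (by norm_num)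
  rcases le_total 0 x with hx | hx
  · refine le_trans ?_ (le_add_of_nonneg_right (by positivity))
    have h1 : (1 + x ^ 2) ^ 3 ≤ 2160 * Real.exp x := by
      have h := Real.pow_div_factorial_le_exp (1 + x) (by linarith) 6
      have h2 : (1 + x ^ 2) ^ 3 ≤ ((1 + x) ^ 2) ^ 3 := by gcongr; nlinarith
      rw [div_le_iff₀ (by positivity), Real.exp_add] at h
      have := km_exp_one_lt
      have hx0 := Real.exp_pos x
      have hfac : ((Nat.factorial 6 : ℕ) : ℝ) = 720 := by norm_num [Nat.factorial]
      rw [hfac] at h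
      nlinarith
    have h2 : (1 + Real.exp (-x)) ^ 4 ≤ 16 := by
      have : Real.exp (-x) ≤ 1 := Real.exp_le_one_iff.2 (by linarith)
      calc (1 + Real.exp (-x)) ^ 4 ≤ (1 + 1) ^ 4 := by gcongr
        _ = 16 := by norm_num
    have h3 : Real.exp (-(Real.exp (-x / 2) / 16)) ≤ 1 := by
      rw [Real.exp_le_one_iff]; have := Real.exp_pos (-x / 2); linarith
    calc _ ≤ (2160 * Real.exp x) * 16 * (Real.exp (-x) * 1) := by gcongr
      _ = 16 * 2160 * (Real.exp x * Real.exp (-x)) := by ring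
      _ = _ := by rw [← Real.exp_add]; simp
  · refine le_trans ?_ (le_add_of_nonneg_left (by positivity))
    have hv1 : 1 + (-x / 2) ≤ Real.exp (-x / 2) := by have := Real.add_one_le_exp (-x / 2); linarith
    have hw : Real.exp (-x) = Real.exp (-x / 2) ^ 2 := by
      rw [← Real.exp_nat_mul]; congr 1; push_cast; ring
    rw [hw]
    set v := Real.exp (-x / 2)
    have hv : 1 ≤ v := by linarith
    have h1 : 1 + x ^ 2 ≤ 4 * v ^ 2 := by nlinarith
    have h2 : 1 + v ^ 2 ≤ 2 * v ^ 2 := by nlinarith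
    have h := Real.pow_div_factorial_le_exp (v / 16) (by positivity) 16
    have h3 : v ^ 16 * Real.exp (-(v / 16)) ≤ 16 ^ 16 * (Nat.factorial 16 : ℕ) := by
      rw [Real.exp_neg, ← div_eq_mul_inv, div_le_iff₀ (Real.exp_pos _)]
      rw [div_le_iff₀ (by positivity), div_pow, div_le_iff₀ (by positivity)] at h
      linarith
    calc _ ≤ (4 * v ^ 2) ^ 3 * (2 * v ^ 2) ^ 4 * (v ^ 2 * Real.exp (-(v / 16))) := by gcongr
      _ = 1024 * (v ^ 16 * Real.exp (-(v / 16))) := by ring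
      _ ≤ _ := by gcongr

noncomputable def kmH (g : ℝ) : ℝ := Real.exp g * g - Real.exp g + 1

lemma km_H_nonneg (g : ℝ) : 0 ≤ kmH g := by
  unfold kmH
  have h := Real.one_sub_le_exp_neg g
  have h2 := mul_le_mul_of_nonneg_left h (Real.exp_pos g).le
  rw [← Real.exp_add] at h2
  simp at h2; linarith

lemma km_H_le (g : ℝ) : kmH g ≤ g ^ 2 * (1 + Real.exp g) := by
  unfold kmH
  have h1 := Real.add_one_le_exp g
  have h := Real.one_sub_le_exp_neg g
  have h2 := mul_le_mul_of_nonneg_left h (Real.exp_pos g).le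
  rw [← Real.exp_add] at h2
  simp at h2
  have hp := Real.exp_pos g
  rcases le_total 0 g with hg | hg <;> nlinarith [sq_nonneg g, mul_nonneg (sq_nonneg g) hp.le]

lemma km_H_near (g : ℝ) (hg : |g| ≤ 1) : |kmH g - g ^ 2 / 2| ≤ 2 * |g| ^ 3 := by
  have h := Real.exp_bound hg (n := 3) (by norm_num)
  simp [Finset.sum_range_succ, Nat.factorial] at h
  set r := Real.exp g - (1 + g + g ^ 2 / 2) with hr
  have e : kmH g - g ^ 2 / 2 = g ^ 3 / 2 + (g - 1) * r := by
    unfold kmH; rw [hr]; ring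
  rw [e]
  have h1 : |g - 1| ≤ 2 := by
    have := abs_sub g 1; simp at this; linarith
  have h0 : 0 ≤ |g| ^ 3 := by positivity
  calc _ ≤ |g ^ 3 / 2| + |(g - 1) * r| := abs_add_le _ _
    _ = |g| ^ 3 / 2 + |g - 1| * |r| := by rw [abs_div, abs_pow, abs_mul]; norm_num
    _ ≤ |g| ^ 3 / 2 + 2 * (|g| ^ 3 * (4 / (6 * 3))) := by gcongr
    _ ≤ _ := by linarith

lemma km_e_bound {x : ℝ} (hx : x ≤ 0) : Real.exp x ≤ 2 * (1 + x ^ 2)⁻¹ := by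
  have h := Real.quadratic_le_exp_of_nonneg (show 0 ≤ -x by linarith)
  rw [← div_eq_mul_inv, le_div_iff₀ (by positivity)]
  have e : Real.exp x * Real.exp (-x) = 1 := by rw [← Real.exp_add]; simp
  have := Real.exp_pos x
  nlinarith

/-- The pointwise domination. -/
lemma km_dominated : ∃ C : ℝ, ∀ n, KmGood n → ∀ x : ℝ,
    gumbelPDF x * kmH (kmG n x) / kmDel n ^ 2 ≤ C * (1 + x ^ 2)⁻¹ := by
  obtain ⟨C, hC0, hC⟩ := km_dom
  refine ⟨C + 2, fun n h x => ?_⟩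
  have hd := km_del_pos h
  have hl : 0 < gumbelPDF x := by unfold gumbelPDF; positivity
  have hf := km_fmax_pos h.n2 x
  have hmul := km_gumbel_mul h.n2 x
  have hs : 0 < (1 + x ^ 2)⁻¹ := by positivity
  have hDg := km_gumbel_le x
  by_cases hz : aSeq n / 2 ≤ kmZ n x
  · have hg := km_g_bound h x hz
    have hDf := km_fmax_le h x hz
    set G := 16 * (1 + x ^ 2) * (1 + Real.exp (-x)) ^ 2
    have hg2 : kmG n x ^ 2 ≤ (kmDel n * G) ^ 2 := by
      rw [← sq_abs]; gcongr
    calc gumbelPDF x * kmH (kmG n x) / kmDel n ^ 2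
        ≤ gumbelPDF x * (kmG n x ^ 2 * (1 + Real.exp (kmG n x))) / kmDel n ^ 2 := by
          gcongr; exact km_H_le _
      _ = kmG n x ^ 2 * (gumbelPDF x + fmax n x) / kmDel n ^ 2 := by rw [← hmul]; ring
      _ ≤ (kmDel n * G) ^ 2 * (2 * kmD x) / kmDel n ^ 2 := by gcongr; linarith
      _ = G ^ 2 * (2 * kmD x) := by field_simp
      _ ≤ C * (1 + x ^ 2)⁻¹ := hC x
      _ ≤ _ := by nlinarith
  · push Not at hz
    have ha := km_a_pos h.n2
    have hy : x - cSeq n < - (aSeq n ^ 2 / 2) := by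
      rw [km_z_eq h.n2] at hz
      have h2 := mul_lt_mul_of_pos_left hz ha
      have : aSeq n * (aSeq n + (x - cSeq n) / aSeq n) = aSeq n ^ 2 + (x - cSeq n) := by field_simp
      rw [this] at h2; nlinarith
    have hx : x ≤ 0 := by
      have := h.ca; nlinarith
    have hg : kmG n x ≤ Real.exp (-x) := by
      rw [km_g_eq h.n2]
      have h1 := km_log_upper (km_p_lt n x)
      have h2 := km_p_pos n x
      have h3 := km_t_nonneg n x
      have hn2 : (2:ℝ) ≤ n := by exact_mod_cast h.n2
      nlinarith
    have hn0 : (0:ℝ) < n := by have := h.n2; exact_mod_cast (by omega : 0 < n)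
    have b1 : gumbelPDF x * kmH (kmG n x) ≤ fmax n x * Real.exp (-x) + gumbelPDF x := by
      have : gumbelPDF x * kmH (kmG n x) = fmax n x * kmG n x - fmax n x + gumbelPDF x := by
        rw [← hmul]; unfold kmH; ring
      rw [this]
      nlinarith
    have b2 : gumbelPDF x * (1 / kmDel n ^ 2) ≤ C * (1 + x ^ 2)⁻¹ := by
      refine le_trans ?_ (hC x)
      have h1 : 1 / kmDel n ^ 2 ≤ Real.exp (-x) := by
        refine h.e1.trans (Real.exp_le_exp.2 ?_); linarith
      have h2 : Real.exp (-x) ≤ (16 * (1 + x ^ 2) * (1 + Real.exp (-x)) ^ 2) ^ 2 := by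
        have hw := Real.exp_pos (-x)
        set w := Real.exp (-x)
        have h3 : w + 1 ≤ 16 * (1 + x ^ 2) * (1 + w) ^ 2 := by
          nlinarith [mul_nonneg (sq_nonneg x) (sq_nonneg (1 + w))]
        nlinarith
      calc gumbelPDF x * (1 / kmDel n ^ 2) ≤ kmD x * (16 * (1 + x ^ 2) * (1 + Real.exp (-x)) ^ 2) ^ 2 := by
            apply mul_le_mul hDg (h1.trans h2) (by positivity) (by linarith)
        _ ≤ _ := by
            have : 0 ≤ kmD x := by linarith
            nlinarith [mul_nonneg this (sq_nonneg (16 * (1 + x ^ 2) * (1 + Real.exp (-x)) ^ 2))]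
    have b3 : fmax n x * Real.exp (-x) * (1 / kmDel n ^ 2) ≤ Real.exp x := by
      have h1 : fmax n x * Real.exp (-x) ≤ Real.exp x * ((n:ℝ) ^ 9 * stdNormalCDF (aSeq n / 2) ^ (n - 1)) := by
        rw [km_fmax_eq h.n2]
        have i1 : (1 - kmP n x) ^ (n - 1) ≤ stdNormalCDF (aSeq n / 2) ^ (n - 1) := by
          have := km_p_lt n x
          apply pow_le_pow_left₀ (by linarith)
          unfold kmP
          have := km_cdf_mono hz
          linarith
        have i2 : Real.exp (-x - kmT n x) * Real.exp (-x) ≤ Real.exp x * (n:ℝ) ^ 9 := by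
          have : (n:ℝ) ^ 9 = Real.exp (9 * (aSeq n ^ 2 / 2)) := by
            rw [km_a_sq h.n2, show 9 * (2 * Real.log n / 2) = (9:ℕ) * Real.log n by push_cast; ring,
              Real.exp_nat_mul, Real.exp_log hn0]
          rw [this, ← Real.exp_add, ← Real.exp_add]
          refine Real.exp_le_exp.2 ?_
          have : -3 * (x - cSeq n) - kmT n x ≤ 9 * (aSeq n ^ 2 / 2) := by
            unfold kmT
            have : 9 * (aSeq n ^ 2 / 2) - (-3 * (x - cSeq n) - (x - cSeq n) ^ 2 / (2 * aSeq n ^ 2)) =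
              (x - cSeq n + 3 * aSeq n ^ 2) ^ 2 / (2 * aSeq n ^ 2) := by field_simp; ring
            have h0 : 0 ≤ (x - cSeq n + 3 * aSeq n ^ 2) ^ 2 / (2 * aSeq n ^ 2) := by positivity
            linarith
          have := h.c1
          linarith
        calc _ = (Real.exp (-x - kmT n x) * Real.exp (-x)) * (1 - kmP n x) ^ (n - 1) := by ring
          _ ≤ (Real.exp x * (n:ℝ) ^ 9) * stdNormalCDF (aSeq n / 2) ^ (n - 1) := by
            apply mul_le_mul i2 i1 _ (by positivity)
            have := km_p_lt n x
            apply pow_nonneg; linarith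
          _ = _ := by ring
      calc _ ≤ Real.exp x * ((n:ℝ) ^ 9 * stdNormalCDF (aSeq n / 2) ^ (n - 1)) * (1 / kmDel n ^ 2) := by
            gcongr
        _ = Real.exp x * ((n:ℝ) ^ 9 * stdNormalCDF (aSeq n / 2) ^ (n - 1) * (1 / kmDel n ^ 2)) := by ring
        _ ≤ Real.exp x * 1 := by gcongr; exact h.e2
        _ = _ := by ring
    calc _ ≤ (fmax n x * Real.exp (-x) + gumbelPDF x) / kmDel n ^ 2 := by gcongr
      _ = fmax n x * Real.exp (-x) * (1 / kmDel n ^ 2) + gumbelPDF x * (1 / kmDel n ^ 2) := by ring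
      _ ≤ 2 * (1 + x ^ 2)⁻¹ + C * (1 + x ^ 2)⁻¹ := by
          have := km_e_bound hx; linarith
      _ = _ := by ring

lemma km_L_top : Tendsto (fun n : ℕ => Real.log n) atTop atTop :=
  Real.tendsto_log_atTop.comp tendsto_natCast_atTop_atTop

lemma km_c_top : Tendsto cSeq atTop atTop := by
  have h : Tendsto (fun n : ℕ => (Real.log (Real.log n) + Real.log (4 * π)) / 2) atTop atTop :=
    (tendsto_atTop_add_const_right _ _ (Real.tendsto_log_atTop.comp km_L_top)).atTop_div_const (by norm_num)
  refine h.congr' ?_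
  filter_upwards [eventually_ge_atTop 2] with n hn
  rw [km_c_eq hn]

lemma km_del_eq {n : ℕ} (hn : 2 ≤ n) : kmDel n =
    (Real.log (Real.log n) + Real.log (4 * π)) ^ 2 / (16 * Real.log n) := by
  have := km_log_pos hn
  unfold kmDel
  rw [km_a_sq hn, km_c_eq hn]; field_simp; norm_num

lemma km_del_zero : Tendsto kmDel atTop (𝓝 0) := by
  have h1 : Tendsto (fun y : ℝ => Real.log y ^ 2 / y) atTop (𝓝 0) :=
    (Real.isLittleO_pow_log_id_atTop (n := 2)).tendsto_div_nhds_zero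
  have h2 : Tendsto (fun y : ℝ => Real.log y / y) atTop (𝓝 0) :=
    Real.isLittleO_log_id_atTop.tendsto_div_nhds_zero
  have h3 : Tendsto (fun y : ℝ => y⁻¹) atTop (𝓝 0) := tendsto_inv_atTop_zero
  set k := Real.log (4 * π) with hk
  have h := (((h1.add (h2.const_mul (2 * k))).add (h3.const_mul (k ^ 2))).div_const 16).comp km_L_top
  simp only [mul_zero, add_zero, zero_div] at h
  refine h.congr' ?_
  filter_upwards [eventually_ge_atTop 2] with n hn
  have := km_log_pos hn
  rw [km_del_eq hn, ← hk]
  simp only [Function.comp]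
  field_simp
  ring

lemma km_good : ∀ᶠ n : ℕ in atTop, KmGood n ∧ 1000 ≤ Real.log n := by
  filter_upwards [eventually_ge_atTop 2, km_L_top.eventually_ge_atTop 1000,
    km_c_top.eventually_ge_atTop 1, km_del_zero.eventually (eventually_le_nhds (show (0:ℝ) < 1 / 32 by norm_num))]
    with n hn hy hc hd
  refine ⟨?_, hy⟩
  have ha := km_a_pos hn
  have ha2 := km_a_sq hn
  have hn0 : (0:ℝ) < n := by exact_mod_cast (by omega : 0 < n)
  have hny : (n:ℝ) = Real.exp (Real.log n) := (Real.exp_log hn0).symm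
  have hdd : kmDel n = cSeq n ^ 2 / (2 * aSeq n ^ 2) := rfl
  have hcd : cSeq n ^ 2 = 2 * aSeq n ^ 2 * kmDel n := by rw [hdd]; field_simp
  set y := Real.log n
  set a := aSeq n
  set c := cSeq n
  set d := kmDel n
  have x1 : 16 * y ^ 2 ≤ Real.exp (y / 2) := by
    have h := Real.pow_div_factorial_le_exp (y / 2) (by linarith) 3
    have hfac : ((Nat.factorial 3 : ℕ) : ℝ) = 6 := by norm_num [Nat.factorial]
    rw [hfac] at h
    nlinarith [mul_nonneg (sq_nonneg y) (show 0 ≤ y - 1000 by linarith)]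
  have x2 : 16 * y ≤ Real.exp (y / 4) := by
    have h := Real.pow_div_factorial_le_exp (y / 4) (by linarith) 2
    have hfac : ((Nat.factorial 2 : ℕ) : ℝ) = 2 := by norm_num [Nat.factorial]
    rw [hfac] at h
    nlinarith
  have a4 : 4 ≤ a := by nlinarith
  have hdlo : 1 / (4 * y) ≤ d := by
    rw [hdd, ha2]
    rw [div_le_div_iff₀ (by linarith) (by linarith)]
    have hcc : 1 ≤ c ^ 2 := by nlinarith
    nlinarith
  have hd0 : 0 < d := lt_of_lt_of_le (by positivity) hdlo
  have hdinv : 1 / d ^ 2 ≤ 16 * y ^ 2 := by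
    have : 1 / d ≤ 4 * y := by
      rw [div_le_iff₀ hd0]
      rw [div_le_iff₀ (by linarith)] at hdlo; linarith
    calc 1 / d ^ 2 = (1 / d) ^ 2 := by ring
      _ ≤ (4 * y) ^ 2 := by gcongr
      _ = _ := by ring
  have hca : c ≤ a ^ 2 / 8 := by nlinarith
  refine ⟨hn, a4, hc, hca, by nlinarith, ?_, ?_, ?_⟩
  · refine le_trans ?_ hdlo
    apply one_div_le_one_div_of_le (by linarith)
    rw [hny]
    have : Real.exp (y / 4) ≤ Real.exp y := Real.exp_le_exp.2 (by linarith)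
    linarith
  · refine (hdinv.trans x1).trans (Real.exp_le_exp.2 ?_)
    change y / 2 ≤ a ^ 2 / 2 - c
    linarith
  · have hmills := km_mills_lower (a / 2)
    have hphi : Real.exp (-(y / 4)) / 3 ≤ stdNormalPDF (a / 2) := by
      unfold stdNormalPDF
      rw [show -(a / 2) ^ 2 / 2 = -(y / 4) by nlinarith]
      gcongr
      rw [Real.sqrt_le_left (by norm_num)]
      have := Real.pi_lt_d2; linarith
    have hfr : 1 / (2 * y) ≤ a / 2 / (1 + (a / 2) ^ 2) := by
      rw [div_le_div_iff₀ (by linarith) (by positivity)]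
      nlinarith
    have hp : Real.exp (-(y / 4)) / 3 * (1 / (2 * y)) ≤ 1 - stdNormalCDF (a / 2) := by
      refine le_trans ?_ hmills
      have := (km_pdf_pos (a / 2)).le
      gcongr
    have hbig : Real.exp (y / 2) ≤ ((n:ℝ) - 1) * (1 - stdNormalCDF (a / 2)) := by
      have hn1 : (n:ℝ) / 2 ≤ n - 1 := by
        have : (2:ℝ) ≤ n := by exact_mod_cast hn
        linarith
      calc Real.exp (y / 2) ≤ (n:ℝ) / 2 * (Real.exp (-(y / 4)) / 3 * (1 / (2 * y))) := by
            have e : (n:ℝ) * Real.exp (-(y / 4)) = Real.exp (y / 2) * Real.exp (y / 4) := by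
              rw [hny, ← Real.exp_add, ← Real.exp_add]; congr 1; change y + _ = _; ring
            have : (n:ℝ) / 2 * (Real.exp (-(y / 4)) / 3 * (1 / (2 * y))) =
                Real.exp (y / 2) * (Real.exp (y / 4) / (12 * y)) := by
              calc _ = (n:ℝ) * Real.exp (-(y / 4)) / (12 * y) := by ring
                _ = _ := by rw [e]; ring
            rw [this]
            apply le_mul_of_one_le_right (Real.exp_pos _).le
            rw [le_div_iff₀ (by linarith)]; linarith
        _ ≤ _ := by
            apply mul_le_mul hn1 hp (by positivity) (by linarith)
    have hpow := km_pow_le_exp (p := 1 - stdNormalCDF (a / 2))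
      (by have := km_cdf_pos (a / 2); linarith) n hn
    rw [show 1 - (1 - stdNormalCDF (a / 2)) = stdNormalCDF (a / 2) by ring] at hpow
    have hpow2 : stdNormalCDF (a / 2) ^ (n - 1) ≤ Real.exp (-Real.exp (y / 2)) :=
      hpow.trans (Real.exp_le_exp.2 (by linarith))
    have hn9 : (n:ℝ) ^ 9 = Real.exp (9 * y) := by
      rw [show 9 * y = (9:ℕ) * y by push_cast; ring, Real.exp_nat_mul, ← hny]
    have hcp := km_cdf_pos (a / 2)
    calc _ ≤ Real.exp (9 * y) * Real.exp (-Real.exp (y / 2)) * Real.exp (y / 2) := by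
          rw [hn9]
          gcongr
          exact hdinv.trans x1
      _ = Real.exp (9 * y + -Real.exp (y / 2) + y / 2) := by rw [Real.exp_add, Real.exp_add]
      _ ≤ 1 := by
          rw [Real.exp_le_one_iff]; nlinarith

lemma km_inv_n_del : Tendsto (fun n : ℕ => 1 / (n:ℝ) / kmDel n) atTop (𝓝 0) := by
  have h0 : Tendsto (fun n : ℕ => 4 * (Real.log n ^ 1 * Real.exp (-Real.log n))) atTop (𝓝 0) := by
    have := ((Real.tendsto_pow_mul_exp_neg_atTop_nhds_zero 1).comp km_L_top).const_mul 4
    simpa [Function.comp_def] using this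
  refine squeeze_zero' ?_ ?_ h0
  · filter_upwards [km_good] with n h
    have := km_del_pos h.1
    positivity
  · filter_upwards [km_good] with n h
    have hd := km_del_pos h.1
    have hn0 : (0:ℝ) < n := by have := h.1.n2; exact_mod_cast (by omega : 0 < n)
    rw [Real.exp_neg, Real.exp_log hn0]
    have h1 : 1 ≤ 4 * Real.log n * kmDel n := by
      have hc := h.1.c1
      have hl := km_log_pos h.1.n2
      unfold kmDel
      rw [km_a_sq h.1.n2]
      have : 4 * Real.log n * (cSeq n ^ 2 / (2 * (2 * Real.log n))) = cSeq n ^ 2 := by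
        field_simp; norm_num
      rw [this]; nlinarith
    rw [div_le_iff₀ hd]
    calc 1 / (n:ℝ) ≤ (4 * Real.log n * kmDel n) / n := by gcongr
      _ = _ := by ring

lemma km_ratio_c (x : ℝ) : Tendsto (fun n => (x - cSeq n) / cSeq n) atTop (𝓝 (-1)) := by
  have h1 : Tendsto (fun n => x / cSeq n - 1) atTop (𝓝 (0 - 1)) :=
    (km_c_top.const_div_atTop x).sub_const 1
  rw [zero_sub] at h1
  refine h1.congr' ?_
  filter_upwards [km_good] with n h
  have := h.1.c1
  have : cSeq n ≠ 0 := by linarith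
  field_simp

lemma km_g_del (x : ℝ) : Tendsto (fun n => kmG n x / kmDel n) atTop (𝓝 (Real.exp (-x) - 1)) := by
  set w := Real.exp (-x) with hw
  have ht1 : Tendsto (fun n => kmT n x / kmDel n) atTop (𝓝 1) := by
    have := (km_ratio_c x).pow 2
    rw [show ((-1:ℝ)) ^ 2 = 1 by norm_num] at this
    refine this.congr' ?_
    filter_upwards [km_good] with n h
    have hd := km_del_pos h.1
    rw [km_t_del h.1]; field_simp
  have ht0 : Tendsto (fun n => kmT n x) atTop (𝓝 0) := by
    have := ht1.mul km_del_zero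
    rw [mul_zero] at this
    refine this.congr' ?_
    filter_upwards [km_good] with n h
    have hd := km_del_pos h.1
    field_simp
  have he : Tendsto (fun n => (1 - Real.exp (-kmT n x)) / kmDel n) atTop (𝓝 1) := by
    have hz : Tendsto (fun n => (1 - Real.exp (-kmT n x)) / kmDel n - kmT n x / kmDel n) atTop (𝓝 0) := by
      have h2 := ht1.mul ht0
      rw [mul_zero] at h2
      refine squeeze_zero_norm' ?_ h2
      filter_upwards [km_good, ht0.eventually (eventually_le_nhds (show (0:ℝ) < 1 by norm_num))] with n h h1
      have hd := km_del_pos h.1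
      have hb := Real.abs_exp_sub_one_sub_id_le (x := -kmT n x)
        (by rw [abs_neg, abs_of_nonneg (km_t_nonneg n x)]; exact h1)
      rw [Real.norm_eq_abs, ← sub_div, abs_div, abs_of_pos hd, div_mul_eq_mul_div]
      gcongr
      rw [abs_sub_comm]
      rw [show kmT n x - (1 - Real.exp (-kmT n x)) = Real.exp (-kmT n x) - 1 - -kmT n x by ring]
      refine hb.trans (le_of_eq (by ring))
    have := hz.add ht1
    simpa using this
  have hR : Tendsto (fun n : ℕ => w * (2 * (2 * |(x - cSeq n) / cSeq n| * (1 / cSeq n) + 4 * (1 / cSeq n) ^ 2))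
      + (8 * w ^ 2 + 2 * w) * (1 / (n:ℝ) / kmDel n)) atTop (𝓝 0) := by
    have hc : Tendsto (fun n => 1 / cSeq n) atTop (𝓝 0) := km_c_top.const_div_atTop 1
    have h1 := (km_ratio_c x).abs
    have := (((((h1.const_mul 2).mul hc).add ((hc.pow 2).const_mul 4)).const_mul 2).const_mul w).add
      (km_inv_n_del.const_mul (8 * w ^ 2 + 2 * w))
    simpa using this
  have hmain : Tendsto (fun n => w * ((1 - Real.exp (-kmT n x)) / kmDel n) - kmT n x / kmDel n) atTop
      (𝓝 (w - 1)) := by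
    simpa using (he.const_mul w).sub ht1
  have hdiff : Tendsto (fun n => kmG n x / kmDel n -
      (w * ((1 - Real.exp (-kmT n x)) / kmDel n) - kmT n x / kmDel n)) atTop (𝓝 0) := by
    refine squeeze_zero_norm' ?_ hR
    filter_upwards [km_good, km_L_top.eventually_ge_atTop (2 * |x|)] with n h hx
    have hd := km_del_pos h.1
    have ha := km_a_pos h.1.n2
    have hc := h.1.c1
    have hc0 : 0 < cSeq n := by linarith
    have hn0 : (0:ℝ) < n := by have := h.1.n2; exact_mod_cast (by omega : 0 < n)
    have hz : aSeq n / 2 ≤ kmZ n x := by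
      rw [km_z_eq h.1.n2]
      have h1 := h.1.ca
      have h2 := km_a_sq h.1.n2
      have h3 := neg_abs_le x
      have : -(aSeq n / 2) ≤ (x - cSeq n) / aSeq n := by
        rw [le_div_iff₀ ha]; nlinarith
      linarith
    have hex := km_expand h.1.n2 h.1.a4 x hz
    rw [← hw] at hex
    have e1 : kmG n x / kmDel n - (w * ((1 - Real.exp (-kmT n x)) / kmDel n) - kmT n x / kmDel n) =
        (kmG n x - (w * (1 - Real.exp (-kmT n x)) - kmT n x)) / kmDel n := by ring
    rw [Real.norm_eq_abs, e1, abs_div, abs_of_pos hd, div_le_iff₀ hd]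
    refine hex.trans (le_of_eq ?_)
    rw [div_eq_mul_one_div (2 * |x - cSeq n| + 4), km_inv_a h.1, abs_div, abs_of_pos hc0]
    field_simp
  have := hdiff.add hmain
  simpa using this

lemma km_pointwise (x : ℝ) : Tendsto (fun n => gumbelPDF x * kmH (kmG n x) / kmDel n ^ 2) atTop
    (𝓝 (gumbelPDF x * ((Real.exp (-x) - 1) ^ 2 / 2))) := by
  have hg := km_g_del x
  have hg0 : Tendsto (fun n => kmG n x) atTop (𝓝 0) := by
    have := hg.mul km_del_zero
    rw [mul_zero] at this
    refine this.congr' ?_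
    filter_upwards [km_good] with n h
    have hd := km_del_pos h.1
    field_simp
  have h1 : Tendsto (fun n => kmH (kmG n x) / kmDel n ^ 2 - (kmG n x / kmDel n) ^ 2 / 2) atTop (𝓝 0) := by
    have h2 := ((hg.abs.pow 2).mul hg0.abs).const_mul 2
    simp only [abs_zero, mul_zero] at h2
    refine squeeze_zero_norm' ?_ h2
    have hs := hg0.abs
    rw [abs_zero] at hs
    filter_upwards [km_good, hs.eventually (eventually_le_nhds (show (0:ℝ) < 1 by norm_num))] with n h hle
    have hd := km_del_pos h.1
    have e : kmH (kmG n x) / kmDel n ^ 2 - (kmG n x / kmDel n) ^ 2 / 2 =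
      (kmH (kmG n x) - kmG n x ^ 2 / 2) / kmDel n ^ 2 := by field_simp
    rw [e, Real.norm_eq_abs, abs_div, abs_of_pos (by positivity : 0 < kmDel n ^ 2), div_le_iff₀ (by positivity)]
    refine (km_H_near _ hle).trans (le_of_eq ?_)
    rw [abs_div, abs_of_pos hd]; field_simp
  have h3 := (h1.add ((hg.pow 2).div_const 2)).const_mul (gumbelPDF x)
  simp only [zero_add] at h3
  refine h3.congr fun n => by ring

lemma km_meas (n : ℕ) : Measurable (fun x => gumbelPDF x * kmH (kmG n x)) := by
  have h1 := (km_fmax_cont n).measurable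
  have h2 := km_gumbel_cont.measurable
  unfold kmH kmG
  fun_prop

lemma km_integral_tendsto : Tendsto (fun n => ∫ x, gumbelPDF x * kmH (kmG n x) / kmDel n ^ 2) atTop
    (𝓝 (1 / 2)) := by
  rw [← km_limit_integral]
  obtain ⟨C, hC⟩ := km_dominated
  refine tendsto_integral_filter_of_dominated_convergence (fun x => C * (1 + x ^ 2)⁻¹) ?_ ?_ ?_ ?_
  · exact Eventually.of_forall fun n => ((km_meas n).div_const _).aestronglyMeasurable
  · filter_upwards [km_good] with n h
    refine Eventually.of_forall fun x => ?_
    rw [Real.norm_of_nonneg]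
    · exact hC n h.1 x
    · have := km_H_nonneg (kmG n x)
      have : 0 < gumbelPDF x := by unfold gumbelPDF; positivity
      positivity
  · exact integrable_inv_one_add_sq.const_mul C
  · exact Eventually.of_forall km_pointwise

lemma km_kl_eq {n : ℕ} (h : KmGood n) :
    ∫ x : ℝ, fmax n x * Real.log (fmax n x / gumbelPDF x) =
      kmDel n ^ 2 * ∫ x, gumbelPDF x * kmH (kmG n x) / kmDel n ^ 2 := by
  obtain ⟨C, hC⟩ := km_dominated
  have hd := km_del_pos h
  have hi : Integrable (fun x => gumbelPDF x * kmH (kmG n x) / kmDel n ^ 2) := by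
    refine (integrable_inv_one_add_sq.const_mul C).mono' ((km_meas n).div_const _).aestronglyMeasurable ?_
    refine Eventually.of_forall fun x => ?_
    rw [Real.norm_of_nonneg]
    · exact hC n h x
    · have := km_H_nonneg (kmG n x)
      have : 0 < gumbelPDF x := by unfold gumbelPDF; positivity
      positivity
  obtain ⟨f1, f2⟩ := km_fmax_integral h.n2
  obtain ⟨g1, g2⟩ := km_gumbel_integral
  have e : (fun x => fmax n x * Real.log (fmax n x / gumbelPDF x)) =
      fun x => kmDel n ^ 2 * (gumbelPDF x * kmH (kmG n x) / kmDel n ^ 2) + (fmax n x - gumbelPDF x) := by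
    funext x
    rw [mul_div_cancel₀ _ (by positivity), ← kmG, ← km_gumbel_mul h.n2 x]
    unfold kmH; ring
  have fg : Integrable (fun x => fmax n x - gumbelPDF x) := f1.sub g1
  rw [e, integral_add (hi.const_mul _) fg, integral_sub f1 g1, f2, g2, integral_const_mul]
  ring

lemma km_factor : Tendsto (fun n : ℕ => kmDel n ^ 2 /
    ((Real.log (Real.log n)) ^ 4 / (512 * (Real.log n) ^ 2))) atTop (𝓝 2) := by
  have hll : Tendsto (fun n : ℕ => Real.log (Real.log n)) atTop atTop := Real.tendsto_log_atTop.comp km_L_top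
  have h1 : Tendsto (fun n : ℕ => 2 * (1 + Real.log (4 * π) / Real.log (Real.log n)) ^ 4) atTop (𝓝 2) := by
    have := (((hll.const_div_atTop (Real.log (4 * π))).const_add 1).pow 4).const_mul 2
    simpa using this
  refine h1.congr' ?_
  filter_upwards [eventually_ge_atTop 2, hll.eventually_gt_atTop 0] with n hn hl
  have := km_log_pos hn
  rw [km_del_eq hn]
  field_simp
  ring

/-- The Kullback–Leibler divergence of the law of the normalized Gaussian maximum `Y_n`
from the standard Gumbel distribution is `(log log n)⁴/(512 (log n)²) · (1 + o(1))`. -/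
theorem kl_gumbel_max_gaussian :
    Tendsto (fun n : ℕ =>
        (∫ x : ℝ, fmax n x * Real.log (fmax n x / gumbelPDF x)) /
          ((Real.log (Real.log n)) ^ 4 / (512 * (Real.log n) ^ 2)))
      atTop (nhds 1) := by
  have h := km_factor.mul km_integral_tendsto
  rw [show (2:ℝ) * (1 / 2) = 1 by norm_num] at h
  refine h.congr' ?_
  filter_upwards [km_good] with n hn
  rw [km_kl_eq hn.1]
  ring
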